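/- (Predictable quadratic variations of the RWG indicator martingales.) Let N^J_n = Σ_{ℓ=1}^n (j_ℓ − E[j_ℓ | F_{ℓ−1}]) and N^K_n = Σ_{ℓ=1}^n (k_ℓ − E[k_ℓ | F_{ℓ−1}]), and J_n = Σ_{ℓ=0}^n j_ℓ. Then for every n ≥ 1, almost surely Σ_{ℓ=1}^n ( E[j_ℓ² | F_{ℓ−1}] − (E[j_ℓ | F_{ℓ−1}])² ) = 2p(1−p)(n + J_{n−1}) and Σ_{ℓ=1}^n ( E[k_ℓ² | F_{ℓ−1}] − (E[k_ℓ | F_{ℓ−1}])² ) = 2p(1−p)(n + J_{n−1}); consequently, if p > 0, both, divided by n, converge almost surely to 4p(1−p)/(2−p). -/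

import Mathlib

open MeasureTheory ProbabilityTheory Real Filter Set
open scoped BigOperators NNReal

noncomputable section

namespace RWG

abbrev E : Type := EuclideanSpace ℝ (Fin 3)

def vec (x y z : ℝ) : E := (EuclideanSpace.equiv (Fin 3) ℝ).symm ![x, y, z]

/-- The four families of vertices of the `2h` graphite lattice. -/
def V (a h : ℝ) (i j : Fin 2) : Set E :=
  {v | ∃ k l n : ℤ, v =
    vec (a * ((-1 : ℝ) ^ ((i : ℕ) + 1) * (if j = 1 then (1 : ℝ) else 0) + (3 / 2) * k))
        (a * ((Real.sqrt 3 / 2) * k + Real.sqrt 3 * l))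
        (h * (2 * n + (if i ≠ j then (1 : ℝ) else 0)))}

/-- Horizontal jump from a vertex of horizontal type `i` in direction `k`. -/
def w (a : ℝ) (i : Fin 2) (k : Fin 3) : E :=
  vec (a * Real.cos (2 * (k : ℕ) * π / 3 + (i : ℕ) * π))
      (a * Real.sin (2 * (k : ℕ) * π / 3 + (i : ℕ) * π)) 0

/-- `S` is a random walk on graphite with parameters `a, h, p, α, q` and natural filtration `F`. -/
structure IsRWG {Ω : Type} [MeasurableSpace Ω] (P : Measure Ω)
    (a h p α : ℝ) (q : Fin 2 → Fin 2 → Fin 3 → ℝ)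
    (S : ℕ → Ω → E) (F : ℕ → MeasurableSpace Ω) : Prop where
  prob : IsProbabilityMeasure P
  ha : 0 < a
  hh : 0 < h
  hp0 : 0 ≤ p
  hp1 : p ≤ 1
  hα0 : 0 < α
  hα1 : α < 1
  hq : ∀ i j k, 0 ≤ q i j k
  hqsum0 : ∀ i, q i 0 0 + q i 0 1 + q i 0 2 = 1 - p
  hqsum1 : ∀ i, q i 1 0 + q i 1 1 + q i 1 2 = 1
  hS0 : ∀ ω, S 0 ω = 0
  hSmeas : ∀ n, Measurable (S n)
  hF : ∀ n, F n =
    MeasurableSpace.comap (fun ω (k : Fin n) => S ((k : ℕ) + 1) ω - S (k : ℕ) ω)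
      MeasurableSpace.pi
  hTrans : ∀ (n : ℕ) (f : E → ℝ), Measurable f → (∃ C, ∀ x, |f x| ≤ C) →
    P[fun ω => f (S (n + 1) ω)|F n] =ᵐ[P]
      fun ω => ∑ i : Fin 2,
        ((V a h i 0).indicator (fun _ => (1 : ℝ)) (S n ω) *
          (α * p * f (S n ω + vec 0 0 h) + (1 - α) * p * f (S n ω + vec 0 0 (-h)) +
            ∑ k : Fin 3, q i 0 k * f (S n ω + w a i k)) +
        (V a h i 1).indicator (fun _ => (1 : ℝ)) (S n ω) *
          ∑ k : Fin 3, q i 1 k * f (S n ω + w a i k))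

def uu (q : Fin 2 → Fin 2 → Fin 3 → ℝ) (i j : Fin 2) : ℝ := q i j 1 + q i j 2

def vv (q : Fin 2 → Fin 2 → Fin 3 → ℝ) (i j : Fin 2) : ℝ := q i j 1 - q i j 2

def ss (q : Fin 2 → Fin 2 → Fin 3 → ℝ) (i j : Fin 2) : ℝ := uu q i j * (1 - uu q i j)

def tt (q : Fin 2 → Fin 2 → Fin 3 → ℝ) (i j : Fin 2) : ℝ := vv q i j * (uu q i j - 1)

/-- The vector `μ` of the RWG. -/
def muG (a h p α : ℝ) (q : Fin 2 → Fin 2 → Fin 3 → ℝ) : E :=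
  vec (3 * a / 8 * (-(uu q 0 0 + uu q 0 1) + (uu q 1 0 + uu q 1 1)))
      (a * Real.sqrt 3 / 8 * ((vv q 0 0 + vv q 0 1) - (vv q 1 0 + vv q 1 1)))
      (h * p / 2 * (2 * α - 1))

/-- The vector `m` of the RWG. -/
def mG (a h p α : ℝ) (q : Fin 2 → Fin 2 → Fin 3 → ℝ) : E :=
  vec (3 * a / 8 * (-(uu q 0 0 - uu q 0 1) + (uu q 1 0 - uu q 1 1)))
      (a * Real.sqrt 3 / 8 * ((vv q 0 0 - vv q 0 1) - (vv q 1 0 - vv q 1 1)))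
      (h * p / 2 * (2 * α - 1))

/-- The vector `θ` of the RWG. -/
def thetaG (a p : ℝ) (q : Fin 2 → Fin 2 → Fin 3 → ℝ) : E :=
  vec (a * ((1 - p / 2) - 3 / 8 * ((uu q 0 0 + uu q 0 1) + (uu q 1 0 + uu q 1 1))))
      (a * Real.sqrt 3 / 8 * ((vv q 0 0 + vv q 0 1) + (vv q 1 0 + vv q 1 1))) 0

/-- The vector `ρ` of the RWG. -/
def rhoG (a p : ℝ) (q : Fin 2 → Fin 2 → Fin 3 → ℝ) : E :=
  vec (a * (-(p / 2) - 3 / 8 * ((uu q 0 0 - uu q 0 1) + (uu q 1 0 - uu q 1 1))))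
      (a * Real.sqrt 3 / 8 * ((vv q 0 0 - vv q 0 1) + (vv q 1 0 - vv q 1 1))) 0

/-- The vector `ζ = (0, 0, hp(2α−1))`. -/
def zetaG (h p α : ℝ) : E := vec 0 0 (h * p * (2 * α - 1))

/-- The indicator process `i_n`. -/
def iP {Ω : Type} (a h : ℝ) (S : ℕ → Ω → E) (n : ℕ) (ω : Ω) : ℝ :=
  (V a h 0 0 ∪ V a h 0 1).indicator (fun _ => (1 : ℝ)) (S n ω) -
    (V a h 1 0 ∪ V a h 1 1).indicator (fun _ => (1 : ℝ)) (S n ω)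

/-- The indicator process `j_n`. -/
def jP {Ω : Type} (a h : ℝ) (S : ℕ → Ω → E) (n : ℕ) (ω : Ω) : ℝ :=
  (V a h 0 0 ∪ V a h 1 0).indicator (fun _ => (1 : ℝ)) (S n ω) -
    (V a h 0 1 ∪ V a h 1 1).indicator (fun _ => (1 : ℝ)) (S n ω)

/-- The indicator process `k_n`. -/
def kP {Ω : Type} (a h : ℝ) (S : ℕ → Ω → E) (n : ℕ) (ω : Ω) : ℝ :=
  (V a h 0 0 ∪ V a h 1 1).indicator (fun _ => (1 : ℝ)) (S n ω) -
    (V a h 0 1 ∪ V a h 1 0).indicator (fun _ => (1 : ℝ)) (S n ω)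

/-- The matrix `σ²` of the RWG. -/
def sigmaG (a h p α : ℝ) (q : Fin 2 → Fin 2 → Fin 3 → ℝ) : Matrix (Fin 3) (Fin 3) ℝ :=
  !![a ^ 2 / 4 * (2 * p * (1 - p) + 9 / 4 * (ss q 0 0 + ss q 1 0 + ss q 0 1 + ss q 1 1)
        - 3 * p * (uu q 0 0 + uu q 1 0)),
     a ^ 2 * Real.sqrt 3 / 16 * (3 * (tt q 0 0 + tt q 1 0 + tt q 0 1 + tt q 1 1)
        + 2 * p * (vv q 0 0 + vv q 1 0)),
     a * h / 8 * (-4 * p * (1 - p) * (2 * α - 1)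
        + 3 * p * (2 * α - 1) * (uu q 0 0 + uu q 1 0));
     a ^ 2 * Real.sqrt 3 / 16 * (3 * (tt q 0 0 + tt q 1 0 + tt q 0 1 + tt q 1 1)
        + 2 * p * (vv q 0 0 + vv q 1 0)),
     3 * a ^ 2 / 16 * ((uu q 0 0 + uu q 1 0 + uu q 0 1 + uu q 1 1)
        - ((vv q 0 0) ^ 2 + (vv q 1 0) ^ 2 + (vv q 0 1) ^ 2 + (vv q 1 1) ^ 2)),
     -(a * h * Real.sqrt 3 / 8) * (p * (2 * α - 1) * (vv q 0 0 + vv q 1 0));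
     a * h / 8 * (-4 * p * (1 - p) * (2 * α - 1)
        + 3 * p * (2 * α - 1) * (uu q 0 0 + uu q 1 0)),
     -(a * h * Real.sqrt 3 / 8) * (p * (2 * α - 1) * (vv q 0 0 + vv q 1 0)),
     h ^ 2 * p / 2 * (1 - p * (2 * α - 1) ^ 2)]

/-- The matrix `γ` of the RWG. -/
def gammaG (a h p α : ℝ) (q : Fin 2 → Fin 2 → Fin 3 → ℝ) : Matrix (Fin 3) (Fin 3) ℝ :=
  !![a ^ 2 / 4 * (2 * p * (1 - p) + 9 / 4 * (ss q 0 0 + ss q 1 0 - ss q 0 1 - ss q 1 1)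
        - 3 * p * (uu q 0 0 + uu q 1 0)),
     a ^ 2 * Real.sqrt 3 / 16 * (3 * (tt q 0 0 + tt q 1 0 - tt q 0 1 - tt q 1 1)
        + 2 * p * (vv q 0 0 + vv q 1 0)),
     a * h / 8 * (-4 * p * (1 - p) * (2 * α - 1)
        + 3 * p * (2 * α - 1) * (uu q 0 0 + uu q 1 0));
     a ^ 2 * Real.sqrt 3 / 16 * (3 * (tt q 0 0 + tt q 1 0 - tt q 0 1 - tt q 1 1)
        + 2 * p * (vv q 0 0 + vv q 1 0)),
     3 * a ^ 2 / 16 * ((uu q 0 0 + uu q 1 0 - uu q 0 1 - uu q 1 1)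
        - ((vv q 0 0) ^ 2 + (vv q 1 0) ^ 2 - (vv q 0 1) ^ 2 - (vv q 1 1) ^ 2)),
     -(a * h * Real.sqrt 3 / 8) * (p * (2 * α - 1) * (vv q 0 0 + vv q 1 0));
     a * h / 8 * (-4 * p * (1 - p) * (2 * α - 1)
        + 3 * p * (2 * α - 1) * (uu q 0 0 + uu q 1 0)),
     -(a * h * Real.sqrt 3 / 8) * (p * (2 * α - 1) * (vv q 0 0 + vv q 1 0)),
     h ^ 2 * p / 2 * (1 - p * (2 * α - 1) ^ 2)]

/-- The matrix `δ` of the RWG. -/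
def deltaG (a h p α : ℝ) (q : Fin 2 → Fin 2 → Fin 3 → ℝ) : Matrix (Fin 3) (Fin 3) ℝ :=
  !![a ^ 2 / 4 * (9 / 4 * (ss q 0 0 - ss q 1 0 - ss q 0 1 + ss q 1 1)
        - 3 * p * (uu q 0 0 - uu q 1 0)),
     a ^ 2 * Real.sqrt 3 / 16 * (3 * (tt q 0 0 - tt q 1 0 - tt q 0 1 + tt q 1 1)
        + 2 * p * (vv q 0 0 - vv q 1 0)),
     a * h / 8 * (3 * p * (2 * α - 1) * (uu q 0 0 - uu q 1 0));
     a ^ 2 * Real.sqrt 3 / 16 * (3 * (tt q 0 0 - tt q 1 0 - tt q 0 1 + tt q 1 1)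
        + 2 * p * (vv q 0 0 - vv q 1 0)),
     3 * a ^ 2 / 16 * ((uu q 0 0 - uu q 1 0 - uu q 0 1 + uu q 1 1)
        - ((vv q 0 0) ^ 2 - (vv q 1 0) ^ 2 - (vv q 0 1) ^ 2 + (vv q 1 1) ^ 2)),
     -(a * h * Real.sqrt 3 / 8) * (p * (2 * α - 1) * (vv q 0 0 - vv q 1 0));
     a * h / 8 * (3 * p * (2 * α - 1) * (uu q 0 0 - uu q 1 0)),
     -(a * h * Real.sqrt 3 / 8) * (p * (2 * α - 1) * (vv q 0 0 - vv q 1 0)),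
     0]

/-- A probability measure on `ℝ³` is the centered Gaussian law with covariance matrix `Γ`
if every linear functional pushes it to the corresponding one-dimensional Gaussian law. -/
def IsCenteredGaussian (G : Measure E) (Γ : Matrix (Fin 3) (Fin 3) ℝ) : Prop :=
  IsProbabilityMeasure G ∧
    ∀ u : Fin 3 → ℝ, G.map (fun x => ∑ r, u r * x r) =
      gaussianReal 0 (Real.toNNReal (∑ r, ∑ c, u r * Γ r c * u c))

/-- View a point of `ℝ³` as a plain function on indices. -/
def toFun (x : E) : Fin 3 → ℝ := x

end RWG

namespace RWG

/-- `I_n = ∑_{ℓ=0}^n i_ℓ`. -/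
def IG {Ω : Type} (a h : ℝ) (S : ℕ → Ω → E) (n : ℕ) (ω : Ω) : ℝ :=
  ∑ l ∈ Finset.range (n + 1), iP a h S l ω

/-- `J_n = ∑_{ℓ=0}^n j_ℓ`. -/
def JG {Ω : Type} (a h : ℝ) (S : ℕ → Ω → E) (n : ℕ) (ω : Ω) : ℝ :=
  ∑ l ∈ Finset.range (n + 1), jP a h S l ω

/-- `K_n = ∑_{ℓ=0}^n k_ℓ`. -/
def KG {Ω : Type} (a h : ℝ) (S : ℕ → Ω → E) (n : ℕ) (ω : Ω) : ℝ :=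
  ∑ l ∈ Finset.range (n + 1), kP a h S l ω

end RWG

section

variable {Ω : Type*} {mΩ : MeasurableSpace Ω} {P : Measure Ω}

/-- Nonnegative functions with summable integrals tend to `0` almost everywhere. -/
lemma ae_tendsto_zero_of_summable_integral {f : ℕ → Ω → ℝ} (hf0 : ∀ n ω, 0 ≤ f n ω)
    (hfi : ∀ n, Integrable (f n) P) (hsum : Summable fun n => ∫ ω, f n ω ∂P) :
    ∀ᵐ ω ∂P, Tendsto (fun n => f n ω) atTop (nhds 0) := by
  have hmeas (n : ℕ) : AEMeasurable (fun ω => ENNReal.ofReal (f n ω)) P :=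
    (hfi n).aemeasurable.ennreal_ofReal
  have hfin : ∫⁻ ω, ∑' n, ENNReal.ofReal (f n ω) ∂P ≠ ⊤ := by
    rw [lintegral_tsum hmeas]
    simp_rw [← ofReal_integral_eq_lintegral_ofReal (hfi _) (Eventually.of_forall (hf0 _))]
    exact hsum.tsum_ofReal_ne_top
  filter_upwards [ae_lt_top' (AEMeasurable.tsum hmeas) hfin] with ω hω
  have h0 := ENNReal.tendsto_atTop_zero_of_tsum_ne_top hω.ne
  have h1 := (ENNReal.tendsto_toReal ENNReal.zero_ne_top).comp h0
  simpa [Function.comp_def, ENNReal.toReal_ofReal (hf0 _ _)] using h1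

variable [IsProbabilityMeasure P] {ℱ : Filtration ℕ mΩ} {D : ℕ → Ω → ℝ} {C : ℝ}

/-- Bounded martingale differences are orthogonal, so the second moment of their sum grows at most
linearly. -/
lemma integral_sq_sum_martingaleDiff_le
    (hDm : ∀ n, Measurable[ℱ (n + 1)] (D n)) (hDb : ∀ n ω, |D n ω| ≤ C)
    (hD : ∀ n, P[D n|ℱ n] =ᵐ[P] 0) (n : ℕ) :
    Integrable (fun ω => (∑ k ∈ Finset.range n, D k ω) ^ 2) P ∧
      ∫ ω, (∑ k ∈ Finset.range n, D k ω) ^ 2 ∂P ≤ n * C ^ 2 := by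
  have hMm (n : ℕ) : Measurable[ℱ n] (fun ω => ∑ k ∈ Finset.range n, D k ω) :=
    Finset.measurable_sum _ fun k hk =>
      (hDm k).mono (ℱ.mono (Finset.mem_range.1 hk)) le_rfl
  have hMb (n : ℕ) (ω : Ω) : |∑ k ∈ Finset.range n, D k ω| ≤ n * C := by
    refine (Finset.abs_sum_le_sum_abs _ _).trans ?_
    simpa using Finset.sum_le_sum fun k (_ : k ∈ Finset.range n) => hDb k ω
  have hDint (n : ℕ) : Integrable (D n) P :=
    Integrable.of_bound ((hDm n).mono (ℱ.le _) le_rfl).aestronglyMeasurable C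
      (Eventually.of_forall (hDb n))
  have hMint (n : ℕ) : Integrable (fun ω => ∑ k ∈ Finset.range n, D k ω) P :=
    integrable_finsetSum _ fun k _ => hDint k
  have hM2 (n : ℕ) : Integrable (fun ω => (∑ k ∈ Finset.range n, D k ω) ^ 2) P := by
    simp_rw [sq]
    exact (hMint n).bdd_mul (hMint n).aestronglyMeasurable (Eventually.of_forall (hMb n))
  have hMD (n : ℕ) : Integrable (fun ω => (∑ k ∈ Finset.range n, D k ω) * D n ω) P :=
    (hDint n).bdd_mul (hMint n).aestronglyMeasurable (Eventually.of_forall (hMb n))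
  have hD2 (n : ℕ) : Integrable (fun ω => D n ω ^ 2) P := by
    simp_rw [sq]
    exact (hDint n).bdd_mul (hDint n).aestronglyMeasurable (Eventually.of_forall (hDb n))
  have horth (n : ℕ) : ∫ ω, (∑ k ∈ Finset.range n, D k ω) * D n ω ∂P = 0 := by
    rw [← integral_condExp (ℱ.le n)]
    refine integral_eq_zero_of_ae ?_
    have hpull := condExp_mul_of_stronglyMeasurable_left (μ := P) (hMm n).stronglyMeasurable
      (hMD n) (hDint n)
    filter_upwards [hpull, hD n] with ω h1 h2
    refine h1.trans ?_
    simp [h2]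
  refine ⟨hM2 n, ?_⟩
  induction n with
  | zero => simp
  | succ n ih =>
    have hexp : ∀ ω, (∑ k ∈ Finset.range (n + 1), D k ω) ^ 2 =
        (∑ k ∈ Finset.range n, D k ω) ^ 2 + 2 * ((∑ k ∈ Finset.range n, D k ω) * D n ω) +
          D n ω ^ 2 := fun ω => by
      rw [Finset.sum_range_succ]
      ring
    have hDle : ∫ ω, D n ω ^ 2 ∂P ≤ C ^ 2 := by
      refine (integral_mono (hD2 n) (integrable_const (C ^ 2)) fun ω => ?_).trans (by simp)
      exact sq_le_sq' (abs_le.1 (hDb n ω)).1 (abs_le.1 (hDb n ω)).2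
    simp_rw [hexp]
    rw [integral_add (by exact (hM2 n).add ((hMD n).const_mul 2)) (hD2 n),
      integral_add (hM2 n) ((hMD n).const_mul 2), integral_const_mul, horth n]
    push_cast
    linarith

/-- Strong law of large numbers for bounded martingale differences, along the squares. -/
lemma ae_tendsto_sum_martingaleDiff_sq_div
    (hDm : ∀ n, Measurable[ℱ (n + 1)] (D n)) (hDb : ∀ n ω, |D n ω| ≤ C)
    (hD : ∀ n, P[D n|ℱ n] =ᵐ[P] 0) :
    ∀ᵐ ω ∂P, Tendsto (fun n : ℕ => (∑ k ∈ Finset.range (n ^ 2), D k ω) / ((n ^ 2 : ℕ) : ℝ))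
      atTop (nhds 0) := by
  have hmom (n : ℕ) := integral_sq_sum_martingaleDiff_le hDm hDb hD (n ^ 2)
  have hae := ae_tendsto_zero_of_summable_integral (P := P)
    (f := fun n ω => (∑ k ∈ Finset.range (n ^ 2), D k ω) ^ 2 / ((n ^ 2 : ℕ) : ℝ) ^ 2)
    (fun n ω => by positivity) (fun n => (hmom n).1.div_const _) ?_
  · filter_upwards [hae] with ω hω
    rw [tendsto_zero_iff_abs_tendsto_zero]
    have h := hω.sqrt
    simpa only [Function.comp_def, ← div_pow, Real.sqrt_sq_eq_abs, Real.sqrt_zero] using h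
  · refine Summable.of_nonneg_of_le (fun n => integral_nonneg fun ω => by positivity)
      (fun n => ?_) ((Real.summable_one_div_nat_pow.2 one_lt_two).mul_left (C ^ 2))
    rw [integral_div]
    rcases Nat.eq_zero_or_pos n with rfl | hn
    · simp
    · have hn' : (0 : ℝ) < n := by exact_mod_cast hn
      rw [div_le_iff₀ (by positivity)]
      refine (hmom n).2.trans (le_of_eq ?_)
      push_cast
      field_simp

end

namespace RWG

lemma vec_add (x y z x' y' z' : ℝ) :
    vec x y z + vec x' y' z' = vec (x + x') (y + y') (z + z') := by
  ext r
  fin_cases r <;> simp [vec]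

lemma vec_inj {x y z x' y' z' : ℝ} (h : vec x y z = vec x' y' z') :
    x = x' ∧ y = y' ∧ z = z' := by
  have h' := congrArg (EuclideanSpace.equiv (Fin 3) ℝ) h
  simp only [vec, ContinuousLinearEquiv.apply_symm_apply] at h'
  exact ⟨congrFun h' 0, congrFun h' 1, congrFun h' 2⟩

lemma cos_two_pi_div_three : Real.cos (2 * π / 3) = -(1 / 2) := by
  rw [show 2 * π / 3 = π - π / 3 by ring, Real.cos_pi_sub, Real.cos_pi_div_three]

lemma sin_two_pi_div_three : Real.sin (2 * π / 3) = Real.sqrt 3 / 2 := by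
  rw [show 2 * π / 3 = π - π / 3 by ring, Real.sin_pi_sub, Real.sin_pi_div_three]

lemma cos_four_pi_div_three : Real.cos (2 * 2 * π / 3) = -(1 / 2) := by
  rw [show 2 * 2 * π / 3 = π / 3 + π by ring, Real.cos_add_pi, Real.cos_pi_div_three]

lemma sin_four_pi_div_three : Real.sin (2 * 2 * π / 3) = -(Real.sqrt 3 / 2) := by
  rw [show 2 * 2 * π / 3 = π / 3 + π by ring, Real.sin_add_pi, Real.sin_pi_div_three]

/-- A vertical jump changes the horizontal type of a vertex with vertical bonds. -/
lemma add_up_mem_V {a h : ℝ} {i : Fin 2} {x : E} (hx : x ∈ V a h i 0) :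
    x + vec 0 0 h ∈ V a h (1 - i) 0 := by
  obtain ⟨k, l, n, rfl⟩ := hx
  rw [vec_add]
  fin_cases i
  · refine ⟨k, l, n, ?_⟩
    congr 1 <;> simp
    ring
  · refine ⟨k, l, n + 1, ?_⟩
    congr 1 <;> simp
    ring

lemma add_down_mem_V {a h : ℝ} {i : Fin 2} {x : E} (hx : x ∈ V a h i 0) :
    x + vec 0 0 (-h) ∈ V a h (1 - i) 0 := by
  obtain ⟨k, l, n, rfl⟩ := hx
  rw [vec_add]
  fin_cases i
  · refine ⟨k, l, n - 1, ?_⟩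
    congr 1 <;> simp
    ring
  · refine ⟨k, l, n, ?_⟩
    congr 1 <;> simp
    ring

/-- A horizontal jump changes both indices of a vertex. -/
lemma add_w_mem_V {a h : ℝ} {i j : Fin 2} {x : E} (r : Fin 3) (hx : x ∈ V a h i j) :
    x + w a i r ∈ V a h (1 - i) (1 - j) := by
  obtain ⟨k, l, n, rfl⟩ := hx
  rw [w, vec_add]
  have hwit : ∃ k' l' : ℤ,
      (r = 0 ∧ k' = k ∧ l' = l) ∨
      (r = 1 ∧ i = 0 ∧ k' = k - 1 ∧ l' = l + 1) ∨ (r = 1 ∧ i = 1 ∧ k' = k + 1 ∧ l' = l - 1) ∨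
      (r = 2 ∧ i = 0 ∧ k' = k - 1 ∧ l' = l) ∨ (r = 2 ∧ i = 1 ∧ k' = k + 1 ∧ l' = l) := by
    fin_cases r <;> fin_cases i <;> simp
  obtain ⟨k', l', hkl⟩ := hwit
  refine ⟨k', l', n, ?_⟩
  rcases hkl with ⟨rfl, rfl, rfl⟩ | ⟨rfl, rfl, rfl, rfl⟩ | ⟨rfl, rfl, rfl, rfl⟩ |
    ⟨rfl, rfl, rfl, rfl⟩ | ⟨rfl, rfl, rfl, rfl⟩
  · fin_cases i <;> fin_cases j <;> congr 1 <;> simp <;> ring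
  all_goals
    fin_cases j <;> congr 1 <;>
      simp [Real.cos_add_pi, Real.sin_add_pi, cos_two_pi_div_three, sin_two_pi_div_three,
        cos_four_pi_div_three, sin_four_pi_div_three] <;> ring

/-- The four families of vertices are pairwise disjoint. -/
lemma V_index_unique {a h : ℝ} (ha : 0 < a) (hh : 0 < h) {i j i' j' : Fin 2} {x : E}
    (hx : x ∈ V a h i j) (hx' : x ∈ V a h i' j') : i = i' ∧ j = j' := by
  obtain ⟨k, l, n, rfl⟩ := hx
  obtain ⟨k', l', n', heq⟩ := hx'
  obtain ⟨h1, -, h3⟩ := vec_inj heq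
  replace h1 := mul_left_cancel₀ ha.ne' h1
  replace h3 := mul_left_cancel₀ hh.ne' h3
  have key (c d : ℤ) (hc : (2 * c : ℝ) + 3 * k = 2 * d + 3 * k') :
      2 * c + 3 * k = 2 * d + 3 * k' := by
    exact_mod_cast hc
  have key' (c d : ℤ) (hc : (2 * n : ℝ) + c = 2 * n' + d) : 2 * n + c = 2 * n' + d := by
    exact_mod_cast hc
  fin_cases i <;> fin_cases j <;> fin_cases i' <;> fin_cases j' <;> simp at h1 h3 ⊢
  all_goals first
    | (have := key' 0 1 (by push_cast; linarith); omega)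
    | (have := key' 1 0 (by push_cast; linarith); omega)
    | (have := key 0 1 (by push_cast; linarith); omega)
    | (have := key 1 0 (by push_cast; linarith); omega)

lemma countable_V (a h : ℝ) (i j : Fin 2) : (V a h i j).Countable := by
  refine (Set.countable_range (fun t : ℤ × ℤ × ℤ =>
    vec (a * ((-1 : ℝ) ^ ((i : ℕ) + 1) * (if j = 1 then (1 : ℝ) else 0) + (3 / 2) * t.1))
        (a * ((Real.sqrt 3 / 2) * t.1 + Real.sqrt 3 * t.2.1))
        (h * (2 * t.2.2 + (if i ≠ j then (1 : ℝ) else 0))))).mono ?_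
  rintro x ⟨k, l, n, rfl⟩
  exact ⟨(k, l, n), rfl⟩

lemma measurableSet_V (a h : ℝ) (i j : Fin 2) : MeasurableSet (V a h i j) :=
  (countable_V a h i j).measurableSet

/-- The function equal to `c i j` on `V a h i j` and to `0` outside the lattice. -/
def typeFun (a h : ℝ) (c : Fin 2 → Fin 2 → ℝ) (x : E) : ℝ :=
  ∑ i, ∑ j, (V a h i j).indicator (fun _ => c i j) x

lemma measurable_typeFun (a h : ℝ) (c : Fin 2 → Fin 2 → ℝ) : Measurable (typeFun a h c) :=
  Finset.measurable_sum _ fun i _ => Finset.measurable_sum _ fun j _ =>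
    measurable_const.indicator (measurableSet_V a h i j)

lemma typeFun_of_mem {a h : ℝ} (ha : 0 < a) (hh : 0 < h) (c : Fin 2 → Fin 2 → ℝ)
    {i j : Fin 2} {x : E} (hx : x ∈ V a h i j) : typeFun a h c x = c i j := by
  unfold typeFun
  rw [Finset.sum_eq_single i, Finset.sum_eq_single j]
  · exact Set.indicator_of_mem hx _
  · intro j' _ hj
    exact Set.indicator_of_notMem (fun hx' => hj (V_index_unique ha hh hx' hx).2) _
  · simp
  · intro i' _ hi
    exact Finset.sum_eq_zero fun j' _ =>
      Set.indicator_of_notMem (fun hx' => hi (V_index_unique ha hh hx' hx).1) _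
  · simp

lemma typeFun_of_notMem {a h : ℝ} (c : Fin 2 → Fin 2 → ℝ) {x : E}
    (hx : ∀ i j, x ∉ V a h i j) : typeFun a h c x = 0 :=
  Finset.sum_eq_zero fun i _ => Finset.sum_eq_zero fun j _ =>
    Set.indicator_of_notMem (hx i j) _

lemma abs_typeFun_le {a h : ℝ} (ha : 0 < a) (hh : 0 < h) {c : Fin 2 → Fin 2 → ℝ} {C : ℝ}
    (hC : 0 ≤ C) (hc : ∀ i j, |c i j| ≤ C) (x : E) : |typeFun a h c x| ≤ C := by
  by_cases hx : ∃ i j, x ∈ V a h i j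
  · obtain ⟨i, j, hx⟩ := hx
    rw [typeFun_of_mem ha hh c hx]
    exact hc i j
  · push Not at hx
    rw [typeFun_of_notMem c hx]
    simpa using hC

/-- The one-step transition operator on functions of the vertex type. -/
def typeStep (p : ℝ) (c : Fin 2 → Fin 2 → ℝ) (i j : Fin 2) : ℝ :=
  if j = 0 then p * c (1 - i) 0 + (1 - p) * c (1 - i) 1 else c (1 - i) 0

/-- The value of `j_n` on each vertex type. -/
def signJ (_ j : Fin 2) : ℝ := if j = 0 then 1 else -1

/-- The value of `k_n` on each vertex type. -/
def signK (i j : Fin 2) : ℝ := if i = j then 1 else -1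

lemma indicator_union_sub_eq_typeFun {a h : ℝ} (ha : 0 < a) (hh : 0 < h)
    (σ : Fin 2 → Fin 2) {c : Fin 2 → Fin 2 → ℝ} (h0 : ∀ i, c i (σ i) = 1)
    (h1 : ∀ i, c i (1 - σ i) = -1) (x : E) :
    (V a h 0 (σ 0) ∪ V a h 1 (σ 1)).indicator (fun _ => (1 : ℝ)) x -
      (V a h 0 (1 - σ 0) ∪ V a h 1 (1 - σ 1)).indicator (fun _ => (1 : ℝ)) x =
      typeFun a h c x := by
  by_cases hx : ∃ i j, x ∈ V a h i j
  · obtain ⟨i, j, hx⟩ := hx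
    have hmem (i' j' : Fin 2) : x ∈ V a h i' j' ↔ i' = i ∧ j' = j :=
      ⟨fun hx' => V_index_unique ha hh hx' hx, by rintro ⟨rfl, rfl⟩; exact hx⟩
    have hj : j = σ i ∨ j = 1 - σ i := by
      generalize σ i = s
      fin_cases j <;> fin_cases s <;> simp
    have hne : ∀ s : Fin 2, 1 - s ≠ s := by decide
    rw [typeFun_of_mem ha hh c hx]
    rcases hj with rfl | rfl
    · rw [h0 i]
      fin_cases i <;> simp [Set.indicator, hmem, hne]
    · rw [h1 i]
      fin_cases i <;> simp [Set.indicator, hmem, (hne _).symm]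
  · push Not at hx
    rw [typeFun_of_notMem c hx]
    simp [Set.indicator, hx]

lemma jP_eq {Ω : Type} {a h : ℝ} {S : ℕ → Ω → E} (ha : 0 < a) (hh : 0 < h) (n : ℕ)
    (ω : Ω) :
    jP a h S n ω = typeFun a h signJ (S n ω) :=
  indicator_union_sub_eq_typeFun ha hh (fun _ => 0) (by simp [signJ]) (by simp [signJ]) _

lemma kP_eq {Ω : Type} {a h : ℝ} {S : ℕ → Ω → E} (ha : 0 < a) (hh : 0 < h) (n : ℕ)
    (ω : Ω) :
    kP a h S n ω = typeFun a h signK (S n ω) := by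
  refine indicator_union_sub_eq_typeFun ha hh (fun i => i) (by simp [signK]) ?_ _
  intro i
  fin_cases i <;> simp [signK]

section

variable {Ω : Type} [MeasurableSpace Ω] {P : Measure Ω} {a h p α : ℝ}
  {q : Fin 2 → Fin 2 → Fin 3 → ℝ} {S : ℕ → Ω → E} {F : ℕ → MeasurableSpace Ω}

/-- A function of the vertex type is transformed by conditioning into a function of the type. -/
lemma IsRWG.condExp_typeFun (hRW : IsRWG P a h p α q S F) (c : Fin 2 → Fin 2 → ℝ) (n : ℕ) :
    P[fun ω => typeFun a h c (S (n + 1) ω)|F n] =ᵐ[P]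
      fun ω => typeFun a h (typeStep p c) (S n ω) := by
  have hbd : ∃ C, ∀ x, |typeFun a h c x| ≤ C :=
    ⟨∑ i, ∑ j, |c i j|, abs_typeFun_le hRW.ha hRW.hh (by positivity) fun i j =>
      (Finset.single_le_sum (f := fun j => |c i j|) (fun _ _ => abs_nonneg _)
        (Finset.mem_univ j)).trans
      (Finset.single_le_sum (f := fun i => ∑ j, |c i j|)
        (fun _ _ => Finset.sum_nonneg fun _ _ => abs_nonneg _) (Finset.mem_univ i))⟩
  refine (hRW.hTrans n _ (measurable_typeFun a h c) hbd).trans (Eventually.of_forall fun ω => ?_)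
  generalize hx : S n ω = x
  simp only [hx]
  generalize hf : typeFun a h c = f
  refine Finset.sum_congr rfl fun i _ => ?_
  rw [Fin.sum_univ_two]
  congr 1
  · by_cases hx : x ∈ V a h i 0
    · have hw (k : Fin 3) := typeFun_of_mem hRW.ha hRW.hh c (add_w_mem_V k hx)
      have hu := typeFun_of_mem hRW.ha hRW.hh c (add_up_mem_V hx)
      have hd := typeFun_of_mem hRW.ha hRW.hh c (add_down_mem_V hx)
      rw [hf] at hw hu hd
      simp only [hw, hu, hd, Set.indicator_of_mem hx, Fin.sum_univ_three, typeStep, if_true,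
        sub_zero]
      linear_combination c (1 - i) 1 * hRW.hqsum0 i
    · simp [hx]
  · by_cases hx : x ∈ V a h i 1
    · have hw (k : Fin 3) := typeFun_of_mem hRW.ha hRW.hh c (add_w_mem_V k hx)
      rw [hf] at hw
      simp only [hw, Set.indicator_of_mem hx, Fin.sum_univ_three, typeStep, one_ne_zero, if_false,
        sub_self]
      linear_combination c (1 - i) 0 * hRW.hqsum1 i
    · simp [hx]

lemma IsRWG.measurable_increment (hRW : IsRWG P a h p α q S F) {k n : ℕ} (hk : k < n) :
    Measurable[F n] (fun ω => S (k + 1) ω - S k ω) := by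
  rw [hRW.hF n]
  exact (measurable_pi_apply (X := fun _ : Fin n => E) ⟨k, hk⟩).comp (comap_measurable _)

lemma IsRWG.measurable_walk (hRW : IsRWG P a h p α q S F) (n : ℕ) : Measurable[F n] (S n) := by
  have hS : S n = fun ω => ∑ k ∈ Finset.range n, (S (k + 1) ω - S k ω) := by
    funext ω
    rw [Finset.sum_range_sub (fun k => S k ω), hRW.hS0, sub_zero]
  rw [hS]
  exact Finset.measurable_sum _ fun k hk => hRW.measurable_increment (Finset.mem_range.1 hk)

/-- The natural filtration of the walk. -/
def IsRWG.filtration (hRW : IsRWG P a h p α q S F) : Filtration ℕ ‹MeasurableSpace Ω› where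
  seq := F
  mono' n m hnm := by
    rw [hRW.hF n, ← measurable_iff_comap_le]
    exact @measurable_pi_lambda Ω (Fin n) (fun _ => E) (F m) _ _ fun k =>
      hRW.measurable_increment (k.2.trans_le hnm)
  le' n := by
    rw [hRW.hF n, ← measurable_iff_comap_le]
    exact measurable_pi_lambda _ fun k => (hRW.hSmeas _).sub (hRW.hSmeas _)

lemma IsRWG.integrable_typeFun (hRW : IsRWG P a h p α q S F) {c : Fin 2 → Fin 2 → ℝ} {C : ℝ}
    (hC : 0 ≤ C) (hc : ∀ i j, |c i j| ≤ C) (n : ℕ) :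
    Integrable (fun ω => typeFun a h c (S n ω)) P := by
  have := hRW.prob
  exact Integrable.of_bound ((measurable_typeFun a h c).comp (hRW.hSmeas n)).aestronglyMeasurable C
    (Eventually.of_forall fun ω => abs_typeFun_le hRW.ha hRW.hh hC hc (S n ω))

/-- The walk almost surely never leaves the lattice. -/
lemma IsRWG.ae_exists_mem_V (hRW : IsRWG P a h p α q S F) :
    ∀ᵐ ω ∂P, ∀ n, ∃ i j, S n ω ∈ V a h i j := by
  have := hRW.prob
  rw [ae_all_iff]
  intro n
  have hint (n : ℕ) := hRW.integrable_typeFun (c := fun _ _ => 1) zero_le_one (by simp) n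
  have hone : ∫ ω, typeFun a h (fun _ _ => 1) (S n ω) ∂P = 1 := by
    induction n with
    | zero =>
      have h0 : (0 : E) ∈ V a h 0 0 := ⟨0, 0, 0, by ext r; fin_cases r <;> simp [vec]⟩
      simp [hRW.hS0, typeFun_of_mem hRW.ha hRW.hh _ h0]
    | succ n ih =>
      have hstep : typeStep p (fun _ _ => 1) = fun _ _ => 1 := by
        funext i j
        simp [typeStep]
      rw [← integral_condExp (hRW.filtration.le n)]
      refine (integral_congr_ae (hRW.condExp_typeFun _ n)).trans ?_
      rwa [hstep]
  have hzero : ∫ ω, (1 - typeFun a h (fun _ _ => 1) (S n ω)) ∂P = 0 := by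
    rw [integral_sub (integrable_const _) (hint n), hone]
    simp
  have hnonneg : 0 ≤ fun ω => 1 - typeFun a h (fun _ _ => 1) (S n ω) := fun ω =>
    sub_nonneg.2 (abs_le.1 (abs_typeFun_le hRW.ha hRW.hh zero_le_one (by simp) (S n ω))).2
  filter_upwards [(integral_eq_zero_iff_of_nonneg hnonneg
    ((integrable_const _).sub (hint n))).1 hzero] with ω hω
  by_contra! hx
  simp [typeFun_of_notMem _ hx] at hω

lemma IsRWG.jP_eq_one_or (hRW : IsRWG P a h p α q S F) {n : ℕ} {ω : Ω}
    (hω : ∃ i j, S n ω ∈ V a h i j) : jP a h S n ω = 1 ∨ jP a h S n ω = -1 := by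
  obtain ⟨i, j, hx⟩ := hω
  rw [jP_eq hRW.ha hRW.hh, typeFun_of_mem hRW.ha hRW.hh _ hx, signJ]
  split_ifs <;> simp

/-- Conditional variance of a sign that distinguishes, from each vertex with vertical bonds,
vertical jumps from horizontal ones. -/
lemma IsRWG.condVar_sign (hRW : IsRWG P a h p α q S F) {c : Fin 2 → Fin 2 → ℝ}
    (hsq : ∀ i j, c i j ^ 2 = 1) (hc : ∀ i, c i 1 = -c i 0) :
    ∀ᵐ ω ∂P, ∀ n, (P[fun ω' => typeFun a h c (S (n + 1) ω') ^ 2|F n]) ω -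
      ((P[fun ω' => typeFun a h c (S (n + 1) ω')|F n]) ω) ^ 2 =
        2 * p * (1 - p) * (1 + jP a h S n ω) := by
  have hsqfun (x : E) : typeFun a h c x ^ 2 = typeFun a h (fun _ _ => 1) x := by
    by_cases hx : ∃ i j, x ∈ V a h i j
    · obtain ⟨i, j, hx⟩ := hx
      rw [typeFun_of_mem hRW.ha hRW.hh _ hx, typeFun_of_mem hRW.ha hRW.hh _ hx, hsq]
    · push Not at hx
      simp [typeFun_of_notMem _ hx]
  simp_rw [hsqfun]
  filter_upwards [ae_all_iff.2 (hRW.condExp_typeFun c),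
    ae_all_iff.2 (hRW.condExp_typeFun fun _ _ => 1), hRW.ae_exists_mem_V] with ω h1 h2 hmem n
  obtain ⟨i, j, hx⟩ := hmem n
  rw [h1 n, h2 n, jP_eq hRW.ha hRW.hh]
  simp only [typeFun_of_mem hRW.ha hRW.hh _ hx]
  fin_cases j
  · simp only [typeStep, signJ, Fin.zero_eta, if_true, hc]
    linear_combination -(2 * p - 1) ^ 2 * hsq (1 - i) 0
  · simp [typeStep, signJ, hsq]

/-- Summation of the conditional variances along the path. -/
lemma IsRWG.sum_condVar_sign (hRW : IsRWG P a h p α q S F) {c : Fin 2 → Fin 2 → ℝ}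
    (hsq : ∀ i j, c i j ^ 2 = 1) (hc : ∀ i, c i 1 = -c i 0) {X : ℕ → Ω → ℝ}
    (hX : ∀ n ω, X n ω = typeFun a h c (S n ω)) :
    ∀ᵐ ω ∂P, ∀ n : ℕ, ∑ l ∈ Finset.Icc 1 n, ((P[fun ω' => X l ω' ^ 2|F (l - 1)]) ω -
      ((P[fun ω' => X l ω'|F (l - 1)]) ω) ^ 2) =
        2 * p * (1 - p) * (n + ∑ l ∈ Finset.range n, jP a h S l ω) := by
  simp_rw [hX]
  filter_upwards [hRW.condVar_sign hsq hc] with ω hω n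
  rw [← Finset.Ico_add_one_right_eq_Icc, Finset.sum_Ico_eq_sum_range]
  simp only [Nat.add_sub_cancel, add_comm 1]
  simp_rw [hω, ← Finset.mul_sum, Finset.sum_add_distrib]
  simp

/-- Law of large numbers for the occupation of the vertices with vertical bonds. -/
lemma IsRWG.ae_tendsto_sum_jP (hRW : IsRWG P a h p α q S F) :
    ∀ᵐ ω ∂P, Tendsto (fun n : ℕ => (n + ∑ l ∈ Finset.range n, jP a h S l ω) / n)
      atTop (nhds (2 / (2 - p))) := by
  have := hRW.prob
  have hp2 : 2 - p ≠ 0 := by linarith [hRW.hp1]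
  have hsign (i j : Fin 2) : |signJ i j| ≤ 1 := by
    unfold signJ
    split_ifs <;> simp
  have hstep (i j : Fin 2) : |typeStep p signJ i j| ≤ 1 := by
    have h0 := hRW.hp0
    have h1 := hRW.hp1
    fin_cases j
    · simp only [typeStep, signJ, Fin.zero_eta, if_true, one_ne_zero, if_false]
      exact abs_le.2 ⟨by linarith, by linarith⟩
    · simp [typeStep, signJ]
  have hDm (n : ℕ) : Measurable[hRW.filtration (n + 1)] fun ω =>
      typeFun a h signJ (S (n + 1) ω) - typeFun a h (typeStep p signJ) (S n ω) := by
    refine Measurable.sub ?_ ?_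
    · exact (measurable_typeFun a h _).comp (hRW.measurable_walk (n + 1))
    · exact (measurable_typeFun a h _).comp
        ((hRW.measurable_walk n).mono (hRW.filtration.mono n.le_succ) le_rfl)
  have hDb (n : ℕ) (ω : Ω) :
      |typeFun a h signJ (S (n + 1) ω) - typeFun a h (typeStep p signJ) (S n ω)| ≤ 2 :=
    (abs_sub _ _).trans (by
      linarith [abs_typeFun_le hRW.ha hRW.hh zero_le_one hsign (S (n + 1) ω),
        abs_typeFun_le hRW.ha hRW.hh zero_le_one hstep (S n ω)])
  have hD (n : ℕ) : P[fun ω => typeFun a h signJ (S (n + 1) ω) -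
      typeFun a h (typeStep p signJ) (S n ω)|hRW.filtration n] =ᵐ[P] 0 := by
    have hint := hRW.integrable_typeFun zero_le_one hstep n
    have hself : P[fun ω => typeFun a h (typeStep p signJ) (S n ω)|hRW.filtration n] =
        fun ω => typeFun a h (typeStep p signJ) (S n ω) :=
      condExp_of_stronglyMeasurable (hRW.filtration.le n)
        (Measurable.stronglyMeasurable
          ((measurable_typeFun a h _).comp (hRW.measurable_walk n))) hint
    refine (condExp_sub (hRW.integrable_typeFun zero_le_one hsign (n + 1)) hint _).trans ?_
    rw [hself]
    filter_upwards [hRW.condExp_typeFun signJ n] with ω hω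
    exact sub_eq_zero.2 hω
  filter_upwards [ae_tendsto_sum_martingaleDiff_sq_div hDm hDb hD, hRW.ae_exists_mem_V]
    with ω hlim hmem
  have hj (n : ℕ) := hRW.jP_eq_one_or (hmem n)
  have hjabs (n : ℕ) : |jP a h S n ω| ≤ 1 := by rcases hj n with h | h <;> simp [h]
  have hdiff (n : ℕ) : typeFun a h signJ (S (n + 1) ω) - typeFun a h (typeStep p signJ) (S n ω) =
      jP a h S (n + 1) ω - jP a h S n ω + ((2 - p) * jP a h S n ω - p) := by
    obtain ⟨i, j, hx⟩ := hmem n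
    rw [jP_eq hRW.ha hRW.hh, jP_eq hRW.ha hRW.hh, typeFun_of_mem hRW.ha hRW.hh _ hx,
      typeFun_of_mem hRW.ha hRW.hh _ hx]
    fin_cases j
    · simp [typeStep, signJ]
      ring
    · simp [typeStep, signJ]
      ring
  have hsum (n : ℕ) : ∑ k ∈ Finset.range n,
      (typeFun a h signJ (S (k + 1) ω) - typeFun a h (typeStep p signJ) (S k ω)) =
      jP a h S n ω - jP a h S 0 ω + ((2 - p) * ∑ k ∈ Finset.range n, jP a h S k ω - n * p) := by
    simp_rw [hdiff]
    rw [Finset.sum_add_distrib, Finset.sum_range_sub fun k => jP a h S k ω,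
      Finset.sum_sub_distrib, ← Finset.mul_sum]
    simp
  refine tendsto_div_of_monotone_of_exists_subseq_tendsto_div _ _ ?_ fun b hb =>
    ⟨fun n => n ^ 2, ?_, tendsto_pow_atTop two_ne_zero, ?_⟩
  · refine monotone_nat_of_le_succ fun n => ?_
    rw [Finset.sum_range_succ]
    push_cast
    linarith [(abs_le.1 (hjabs n)).1]
  · have hlim1 : Tendsto (fun n : ℕ => (1 + 1 / (n : ℝ)) ^ 2) atTop (nhds 1) := by
      simpa using (tendsto_one_div_atTop_nhds_zero_nat.const_add (1 : ℝ)).pow 2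
    filter_upwards [hlim1.eventually_le_const hb, eventually_gt_atTop 0] with n hn hpos
    have hn' : (0 : ℝ) < n := by exact_mod_cast hpos
    calc (((n + 1) ^ 2 : ℕ) : ℝ) = (1 + 1 / (n : ℝ)) ^ 2 * (n ^ 2 : ℕ) := by
          push_cast
          field_simp
      _ ≤ b * (n ^ 2 : ℕ) := by gcongr
  · have hsq : Tendsto (fun n : ℕ => (((n ^ 2 : ℕ) : ℝ))⁻¹) atTop (nhds 0) :=
      (tendsto_inv_atTop_zero.comp tendsto_natCast_atTop_atTop).comp
        (tendsto_pow_atTop two_ne_zero)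
    have hbdry : Tendsto (fun n : ℕ => (jP a h S 0 ω - jP a h S (n ^ 2) ω) *
        (((n ^ 2 : ℕ) : ℝ))⁻¹) atTop (nhds 0) := by
      refine bdd_le_mul_tendsto_zero' 2 (Eventually.of_forall fun n => ?_) hsq
      exact (abs_sub _ _).trans (by linarith [hjabs 0, hjabs (n ^ 2)])
    have htot := ((hlim.add hbdry).add_const 2).div_const (2 - p)
    rw [add_zero, zero_add] at htot
    refine htot.congr' ?_
    filter_upwards [eventually_gt_atTop 0] with n hpos
    have hn' : ((n ^ 2 : ℕ) : ℝ) ≠ 0 := by positivity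
    rw [hsum]
    field_simp
    ring

end

end RWG

theorem rwg_indicator_qv {Ω : Type} [MeasurableSpace Ω] (P : Measure Ω)
    (a h p α : ℝ) (q : Fin 2 → Fin 2 → Fin 3 → ℝ)
    (S : ℕ → Ω → RWG.E) (F : ℕ → MeasurableSpace Ω)
    (hRW : RWG.IsRWG P a h p α q S F) :
    (∀ n : ℕ, 1 ≤ n → ∀ᵐ ω ∂P,
      (∑ l ∈ Finset.Icc 1 n,
        ((P[fun ω' => RWG.jP a h S l ω' ^ 2|F (l - 1)]) ω -
          ((P[fun ω' => RWG.jP a h S l ω'|F (l - 1)]) ω) ^ 2) =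
        2 * p * (1 - p) * (n + RWG.JG a h S (n - 1) ω)) ∧
      (∑ l ∈ Finset.Icc 1 n,
        ((P[fun ω' => RWG.kP a h S l ω' ^ 2|F (l - 1)]) ω -
          ((P[fun ω' => RWG.kP a h S l ω'|F (l - 1)]) ω) ^ 2) =
        2 * p * (1 - p) * (n + RWG.JG a h S (n - 1) ω))) ∧
    (0 < p →
      (∀ᵐ ω ∂P, Tendsto (fun n : ℕ => (n : ℝ)⁻¹ *
        ∑ l ∈ Finset.Icc 1 n,
          ((P[fun ω' => RWG.jP a h S l ω' ^ 2|F (l - 1)]) ω -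
            ((P[fun ω' => RWG.jP a h S l ω'|F (l - 1)]) ω) ^ 2))
        atTop (nhds (4 * p * (1 - p) / (2 - p)))) ∧
      (∀ᵐ ω ∂P, Tendsto (fun n : ℕ => (n : ℝ)⁻¹ *
        ∑ l ∈ Finset.Icc 1 n,
          ((P[fun ω' => RWG.kP a h S l ω' ^ 2|F (l - 1)]) ω -
            ((P[fun ω' => RWG.kP a h S l ω'|F (l - 1)]) ω) ^ 2))
        atTop (nhds (4 * p * (1 - p) / (2 - p))))) := by
  have hJ := hRW.sum_condVar_sign (c := RWG.signJ) (X := RWG.jP a h S)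
    (fun i j => by unfold RWG.signJ; split_ifs <;> norm_num) (fun i => by simp [RWG.signJ])
    (RWG.jP_eq hRW.ha hRW.hh)
  have hK := hRW.sum_condVar_sign (c := RWG.signK) (X := RWG.kP a h S)
    (fun i j => by unfold RWG.signK; split_ifs <;> norm_num)
    (fun i => by fin_cases i <;> simp [RWG.signK]) (RWG.kP_eq hRW.ha hRW.hh)
  have hlim : ∀ᵐ ω ∂P, Tendsto (fun n : ℕ => (n : ℝ)⁻¹ *
      (2 * p * (1 - p) * (n + ∑ l ∈ Finset.range n, RWG.jP a h S l ω)))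
      atTop (nhds (4 * p * (1 - p) / (2 - p))) := by
    filter_upwards [hRW.ae_tendsto_sum_jP] with ω hω
    convert hω.const_mul (2 * p * (1 - p)) using 2 <;> ring
  refine ⟨fun n hn => ?_, fun _ => ⟨?_, ?_⟩⟩
  · filter_upwards [hJ, hK] with ω hJω hKω
    rw [RWG.JG, Nat.sub_add_cancel hn]
    exact ⟨hJω n, hKω n⟩
  · filter_upwards [hJ, hlim] with ω hJω hω
    simpa only [hJω] using hω
  · filter_upwards [hK, hlim] with ω hKω hω
    simpa only [hKω] using hω
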